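/- arXiv:1801.03929 — 5 statements merged into one kernel-verified Lean document; each statement's English description precedes it below -/
import Mathlib

section
/- Let D be a finite nonempty index set, partitioned into a collection Δ of nonempty domains δ ⊆ D, with positive weights w_δ > 0 and w_d > 0, and let d_C(x,y) = Σ_{δ∈Δ} w_δ · √(Σ_{d∈δ} w_d·(x_d − y_d)²). Let C = {x ∈ ℝ^D : ∀d ∈ D, p⁻_d ≤ x_d ≤ p⁺_d} be an axis-parallel cuboid given by p⁻, p⁺ ∈ ℝ^D. Then C is convex under d_C: for all x, z ∈ C and y ∈ ℝ^D, if d_C(x,y) + d_C(y,z) = d_C(x,z) then y ∈ C. -/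
open Finset

/-!
The combined metric is a positive combination of the Euclidean distances of the rescaled points
`(√w_d · x_d)_{d ∈ δ}`. Equality in a sum of triangle inequalities forces equality in each of them,
and since Euclidean space is strictly convex, equality on the domain `δ` puts the restriction of `y`
on the segment between those of `x` and `z`. Hence every coordinate of `y` lies between the
corresponding coordinates of `x` and `z`.
-/

/-- The map `x ↦ (√(w d) * x d)_{d ∈ s}` into Euclidean space. It turns the weighted Euclidean
distance on the domain `s` into the Euclidean distance (`dist_weightedCoords`). -/
noncomputable def weightedCoords {D : Type*} (w : D → ℝ) (s : Finset D) (x : D → ℝ) :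
    EuclideanSpace ℝ s :=
  WithLp.toLp 2 fun d => √(w d) * x d

theorem dist_weightedCoords {D : Type*} {w : D → ℝ} {s : Finset D} (hw : ∀ d ∈ s, 0 ≤ w d)
    (x y : D → ℝ) :
    dist (weightedCoords w s x) (weightedCoords w s y) = √(∑ d ∈ s, w d * (x d - y d) ^ 2) := by
  have coord_sq (d : s) :
      dist (weightedCoords w s x d) (weightedCoords w s y d) ^ 2 = w d * (x d - y d) ^ 2 := by
    rw [Real.dist_eq, sq_abs, weightedCoords, weightedCoords, ← mul_sub, mul_pow,
      Real.sq_sqrt (hw d d.2)]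
  rw [EuclideanSpace.dist_eq, ← sum_coe_sort s]
  simp only [coord_sq]

theorem wbtw_apply_of_wbtw_weightedCoords {D : Type*} {w : D → ℝ} {s : Finset D} {d : D}
    (hd : d ∈ s) (hw : 0 < w d) {x y z : D → ℝ}
    (h : Wbtw ℝ (weightedCoords w s x) (weightedCoords w s y) (weightedCoords w s z)) :
    Wbtw ℝ (x d) (y d) (z d) := by
  let unscale : EuclideanSpace ℝ s →ₗ[ℝ] ℝ :=
    (√(w d))⁻¹ • (EuclideanSpace.proj (𝕜 := ℝ) (⟨d, hd⟩ : s)).toLinearMap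
  have unscale_weightedCoords (u : D → ℝ) : unscale (weightedCoords w s u) = u d :=
    inv_mul_cancel_left₀ (Real.sqrt_ne_zero'.2 hw) (u d)
  simpa only [LinearMap.coe_toAffineMap, unscale_weightedCoords] using h.map unscale.toAffineMap

theorem dist_add_dist_eq_of_sum_mul_dist_add_eq {ι : Type*} {E : ι → Type*}
    [∀ j, PseudoMetricSpace (E j)] {s : Finset ι} {w : ι → ℝ} (hw : ∀ i ∈ s, 0 ≤ w i)
    {x y z : ∀ j, E j}
    (h : ∑ j ∈ s, w j * dist (x j) (y j) + ∑ j ∈ s, w j * dist (y j) (z j) =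
      ∑ j ∈ s, w j * dist (x j) (z j)) {j : ι} (hj : j ∈ s) (hwj : 0 < w j) :
    dist (x j) (y j) + dist (y j) (z j) = dist (x j) (z j) := by
  simp only [← sum_add_distrib, ← mul_add] at h
  have triangle (i) (hi : i ∈ s) :
      w i * dist (x i) (z i) ≤ w i * (dist (x i) (y i) + dist (y i) (z i)) :=
    mul_le_mul_of_nonneg_left (dist_triangle _ _ _) (hw i hi)
  exact mul_left_cancel₀ hwj.ne' ((sum_eq_sum_iff_of_le triangle).1 h.symm j hj).symm

/-- The combined metric `d_C`: a weighted Manhattan sum, over the domains, of weighted Euclidean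
distances. The domains are the fibers of the block map `bl`. -/
noncomputable def combinedDist {D ι : Type*} [Fintype D] [Fintype ι] [DecidableEq ι]
    (bl : D → ι) (wδ : ι → ℝ) (wd : D → ℝ) (x y : D → ℝ) : ℝ :=
  ∑ j, wδ j * √(∑ d with bl d = j, wd d * (x d - y d) ^ 2)

section CombinedDist

variable {D ι : Type*} [Fintype D] [Fintype ι] [DecidableEq ι]
  {bl : D → ι} {wδ : ι → ℝ} {wd : D → ℝ}

theorem combinedDist_eq_sum_dist_weightedCoords (hwd : ∀ d, 0 ≤ wd d) (x y : D → ℝ) :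
    combinedDist bl wδ wd x y =
      ∑ j, wδ j *
        dist (weightedCoords wd {d | bl d = j} x) (weightedCoords wd {d | bl d = j} y) := by
  simp only [combinedDist, dist_weightedCoords fun d _ => hwd d]

theorem wbtw_apply_of_combinedDist_add_eq (hwδ : ∀ j, 0 < wδ j) (hwd : ∀ d, 0 < wd d)
    {x y z : D → ℝ}
    (h : combinedDist bl wδ wd x y + combinedDist bl wδ wd y z = combinedDist bl wδ wd x z)
    (d : D) : Wbtw ℝ (x d) (y d) (z d) := by
  simp only [combinedDist_eq_sum_dist_weightedCoords fun d => (hwd d).le] at h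
  have domain_eq :=
    dist_add_dist_eq_of_sum_mul_dist_add_eq (fun j _ => (hwδ j).le) h (mem_univ (bl d)) (hwδ (bl d))
  exact wbtw_apply_of_wbtw_weightedCoords (by simp) (hwd d) (dist_add_dist_eq_iff.1 domain_eq)

end CombinedDist

/-- An axis-parallel cuboid is convex under the combined metric
d_C.  The partition of the dimensions `D` into nonempty domains is given by the
fibers of the surjective block map `bl : D → ι`. -/
theorem cuboid_convex_under_combined_metric
    {D ι : Type*} [Fintype D] [Nonempty D] [Fintype ι] [DecidableEq ι]
    (bl : D → ι) (hbl : Function.Surjective bl)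
    (wδ : ι → ℝ) (wd : D → ℝ)
    (hwδ : ∀ j, 0 < wδ j) (hwd : ∀ d, 0 < wd d)
    (dC : (D → ℝ) → (D → ℝ) → ℝ)
    (hdC : ∀ x y, dC x y = ∑ j : ι, wδ j *
      Real.sqrt (∑ d ∈ univ.filter (fun d => bl d = j), wd d * (x d - y d) ^ 2))
    (pm pp : D → ℝ) :
    ∀ x ∈ {x : D → ℝ | ∀ d, pm d ≤ x d ∧ x d ≤ pp d},
    ∀ z ∈ {x : D → ℝ | ∀ d, pm d ≤ x d ∧ x d ≤ pp d},
    ∀ y : D → ℝ, dC x y + dC y z = dC x z →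
      y ∈ {x : D → ℝ | ∀ d, pm d ≤ x d ∧ x d ≤ pp d} := by
  intro x hx z hz y hy d
  obtain rfl : dC = combinedDist bl wδ wd := funext₂ hdC
  have between : Wbtw ℝ (x d) (y d) (z d) := wbtw_apply_of_combinedDist_add_eq hwδ hwd hy d
  exact (convex_Icc (pm d) (pp d)).mem_of_wbtw between (hx d) (hz d)
end

section
/- Let D be a finite nonempty index set, partitioned into a collection Δ of nonempty domains δ ⊆ D, with positive weights w_δ > 0 and w_d > 0. Let d_C(x,y) = Σ_{δ∈Δ} w_δ · √(Σ_{d∈δ} w_d·(x_d − y_d)²) and, for each domain δ, d_E^δ(x,y) = √(Σ_{d∈δ} w_d·(x_d − y_d)²). Then for all x, y, z ∈ ℝ^D the following are equivalent: (i) d_C(x,y) + d_C(y,z) = d_C(x,z); (ii) for every δ ∈ Δ, d_E^δ(x,y) + d_E^δ(y,z) = d_E^δ(x,z); (iii) for every δ ∈ Δ there exists t ∈ [0,1] such that y_d = t·x_d + (1 − t)·z_d for all d ∈ δ. -/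
open Finset

/-!
Multiplying the coordinate at `d` by `√(w d)` turns each intra-domain distance into a genuine
Euclidean one. Positive combinations of triangle inequalities are equalities only when each of
them is, which reduces betweenness for the combined metric to the separate domains; there strict
convexity of the Euclidean norm identifies metric betweenness with lying on a segment.
-/

theorem sum_mul_eq_sum_mul_iff_of_le {ι R : Type*} [Semiring R] [PartialOrder R]
    [IsStrictOrderedRing R] {J : Finset ι} {c f g : ι → R} (hc : ∀ j ∈ J, 0 < c j)
    (hfg : ∀ j ∈ J, f j ≤ g j) :
    ∑ j ∈ J, c j * f j = ∑ j ∈ J, c j * g j ↔ ∀ j ∈ J, f j = g j := by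
  rw [sum_eq_sum_iff_of_le fun j hj => mul_le_mul_of_nonneg_left (hfg j hj) (hc j hj).le]
  refine forall₂_congr fun j hj => ⟨fun h => ?_, congrArg (c j * ·)⟩
  exact (hfg j hj).eq_of_not_lt fun hlt => (mul_lt_mul_of_pos_left hlt (hc j hj)).ne h

section WeightedDist

variable {D : Type*} {s : Finset D} {w : D → ℝ}

/-- The weighted Euclidean distance on the coordinates in `s`, the paper's `d_E^δ` for `s = δ`.
It is a pseudometric on `D → ℝ`, as coordinates outside `s` are ignored. -/
noncomputable def weightedDist (s : Finset D) (w x y : D → ℝ) : ℝ :=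
  √(∑ d ∈ s, w d * (x d - y d) ^ 2)

/-- Restriction to the coordinates in `s` followed by scaling the coordinate at `d` by `√(w d)`.
It carries `weightedDist s w` to the Euclidean distance on `ℝ^s`. -/
noncomputable def weightedRestrict (s : Finset D) (w : D → ℝ) :
    (D → ℝ) →ₗ[ℝ] EuclideanSpace ℝ s where
  toFun x := WithLp.toLp 2 fun d => √(w d) * x d
  map_add' x y := by ext d; simp [mul_add]
  map_smul' a x := by ext d; simp [mul_left_comm]

@[simp]
theorem weightedRestrict_apply (x : D → ℝ) (d : s) : weightedRestrict s w x d = √(w d) * x d :=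
  rfl

theorem dist_weightedRestrict (hw : ∀ d ∈ s, 0 ≤ w d) (x y : D → ℝ) :
    dist (weightedRestrict s w x) (weightedRestrict s w y) = weightedDist s w x y := by
  rw [EuclideanSpace.dist_eq, weightedDist, ← sum_coe_sort s]
  congr! 2 with d
  rw [weightedRestrict_apply, weightedRestrict_apply, Real.dist_eq, sq_abs, ← mul_sub, mul_pow,
    Real.sq_sqrt (hw d d.2)]

theorem weightedDist_triangle (hw : ∀ d ∈ s, 0 ≤ w d) (x y z : D → ℝ) :
    weightedDist s w x z ≤ weightedDist s w x y + weightedDist s w y z := by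
  simpa only [dist_weightedRestrict hw] using
    dist_triangle (weightedRestrict s w x) (weightedRestrict s w y) (weightedRestrict s w z)

theorem weightedRestrict_eq_iff (hw : ∀ d ∈ s, 0 < w d) {x y : D → ℝ} :
    weightedRestrict s w x = weightedRestrict s w y ↔ ∀ d ∈ s, x d = y d := by
  have coord_eq_iff (d : s) : √(w d) * x d = √(w d) * y d ↔ x d = y d :=
    mul_right_inj' (Real.sqrt_pos.2 (hw d d.2)).ne'
  simp [PiLp.ext_iff, -mul_eq_mul_left_iff, coord_eq_iff]

theorem wbtw_weightedRestrict_iff (hw : ∀ d ∈ s, 0 < w d) {x y z : D → ℝ} :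
    Wbtw ℝ (weightedRestrict s w x) (weightedRestrict s w y) (weightedRestrict s w z) ↔
      ∃ t ∈ Set.Icc (0 : ℝ) 1, ∀ d ∈ s, y d = t * x d + (1 - t) * z d := by
  rw [wbtw_comm]
  refine exists_congr fun t => and_congr_right fun _ => ?_
  have lineMap_eq : AffineMap.lineMap (weightedRestrict s w z) (weightedRestrict s w x) t =
      weightedRestrict s w (t • x + (1 - t) • z) := by
    simp only [AffineMap.lineMap_apply_module, map_add, map_smul, add_comm]
  rw [lineMap_eq, eq_comm, weightedRestrict_eq_iff hw]
  rfl

theorem weightedDist_add_weightedDist_eq_iff (hw : ∀ d ∈ s, 0 < w d) {x y z : D → ℝ} :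
    weightedDist s w x y + weightedDist s w y z = weightedDist s w x z ↔
      ∃ t ∈ Set.Icc (0 : ℝ) 1, ∀ d ∈ s, y d = t * x d + (1 - t) * z d := by
  simp only [← dist_weightedRestrict fun d hd => (hw d hd).le]
  rw [dist_add_dist_eq_iff, wbtw_weightedRestrict_iff hw]

theorem sum_mul_weightedDist_add_eq_iff {ι : Type*} {J : Finset ι} {s : ι → Finset D}
    {c : ι → ℝ} {w : ι → D → ℝ} (hc : ∀ j ∈ J, 0 < c j) (hw : ∀ j ∈ J, ∀ d ∈ s j, 0 ≤ w j d)
    {x y z : D → ℝ} :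
    ∑ j ∈ J, c j * weightedDist (s j) (w j) x y + ∑ j ∈ J, c j * weightedDist (s j) (w j) y z =
        ∑ j ∈ J, c j * weightedDist (s j) (w j) x z ↔
      ∀ j ∈ J, weightedDist (s j) (w j) x y + weightedDist (s j) (w j) y z =
        weightedDist (s j) (w j) x z := by
  simp only [← sum_add_distrib, ← mul_add]
  rw [eq_comm, sum_mul_eq_sum_mul_iff_of_le hc fun j hj => weightedDist_triangle (hw j hj) x y z]
  simp only [eq_comm]

end WeightedDist

theorem combined_betweenness_characterization_general {D ι : Type*} {J : Finset ι}
    {s : ι → Finset D} {c : ι → ℝ} {w : ι → D → ℝ} (hc : ∀ j ∈ J, 0 < c j)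
    (hw : ∀ j ∈ J, ∀ d ∈ s j, 0 < w j d) (x y z : D → ℝ) :
    (∑ j ∈ J, c j * weightedDist (s j) (w j) x y + ∑ j ∈ J, c j * weightedDist (s j) (w j) y z =
        ∑ j ∈ J, c j * weightedDist (s j) (w j) x z ↔
      ∀ j ∈ J, weightedDist (s j) (w j) x y + weightedDist (s j) (w j) y z =
        weightedDist (s j) (w j) x z) ∧
    ((∀ j ∈ J, weightedDist (s j) (w j) x y + weightedDist (s j) (w j) y z =
        weightedDist (s j) (w j) x z) ↔
      ∀ j ∈ J, ∃ t ∈ Set.Icc (0 : ℝ) 1, ∀ d ∈ s j, y d = t * x d + (1 - t) * z d) :=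
  ⟨sum_mul_weightedDist_add_eq_iff hc fun j hj d hd => (hw j hj d hd).le,
    forall₂_congr fun j hj => weightedDist_add_weightedDist_eq_iff (hw j hj)⟩

/-- Equivalence of (i) metric betweenness under the combined
metric d_C, (ii) simultaneous metric betweenness under each intra-domain
weighted Euclidean metric, and (iii) per-domain convex combinations.  The
partition of `D` into nonempty domains is given by the fibers of the
surjective block map `bl : D → ι`. -/
theorem combined_betweenness_characterization
    {D ι : Type*} [Fintype D] [Nonempty D] [Fintype ι] [DecidableEq ι]
    (bl : D → ι) (hbl : Function.Surjective bl)
    (wδ : ι → ℝ) (wd : D → ℝ)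
    (hwδ : ∀ j, 0 < wδ j) (hwd : ∀ d, 0 < wd d)
    (dC : (D → ℝ) → (D → ℝ) → ℝ)
    (hdC : ∀ x y, dC x y = ∑ j : ι, wδ j *
      Real.sqrt (∑ d ∈ univ.filter (fun d => bl d = j), wd d * (x d - y d) ^ 2))
    (dE : ι → (D → ℝ) → (D → ℝ) → ℝ)
    (hdE : ∀ j x y, dE j x y =
      Real.sqrt (∑ d ∈ univ.filter (fun d => bl d = j), wd d * (x d - y d) ^ 2))
    (x y z : D → ℝ) :
    (dC x y + dC y z = dC x z ↔ ∀ j : ι, dE j x y + dE j y z = dE j x z) ∧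
    ((∀ j : ι, dE j x y + dE j y z = dE j x z) ↔
      ∀ j : ι, ∃ t ∈ Set.Icc (0 : ℝ) 1,
        ∀ d, bl d = j → y d = t * x d + (1 - t) * z d) := by
  simpa [weightedDist, hdC, hdE] using combined_betweenness_characterization_general
    (J := univ) (s := fun j => {d | bl d = j}) (fun j _ => hwδ j) (fun _ _ d _ => hwd d) x y z
end

section
/- Let D be a finite nonempty index set with positive weights w_d > 0 and let d_M(x,y) = Σ_{d∈D} w_d·|x_d − y_d| be the weighted Manhattan metric on ℝ^D. A nonempty set S ⊆ ℝ^D is convex under d_M (i.e., for all x, z ∈ S, every y with d_M(x,y) + d_M(y,z) = d_M(x,z) lies in S) if and only if S is an axis-parallel cuboid, i.e., S = ∏_{d∈D} I_d is a product of order-convex subsets I_d ⊆ ℝ (intervals, possibly unbounded). -/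
/-!
With `δ d a b = w d * |a - b|`, the triangle inequality holds in each coordinate, so equality in
the triangle inequality for the sum forces equality in every coordinate: betweenness is
coordinatewise, and a product of convex sets is convex. Conversely, for `x` and `z` in a convex
set `S`, replacing one coordinate of `x` by a value between `x d` and `z d` gives a point between
`x` and `z`. Hence `S` has convex projections, and it contains every point of their product, which
is reached from any point of `S` by replacing the coordinates one at a time.
-/

section MetricConvex

variable {X M : Type*}

/-- Convexity of a set under a distance function `δ`: the set contains every point lying between
two of its points. The axioms of a metric are not part of the definition, so that `δ` may take
values in any type with an addition. -/
def IsMetricConvex [Add M] (δ : X → X → M) (C : Set X) : Prop :=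
  ∀ x ∈ C, ∀ z ∈ C, ∀ y, δ x y + δ y z = δ x z → y ∈ C

theorem isMetricConvex_const_mul_iff [NonUnitalNonAssocSemiring M] [IsLeftCancelMulZero M]
    {w : M} (hw : w ≠ 0) {δ : X → X → M} {C : Set X} :
    IsMetricConvex (fun x y => w * δ x y) C ↔ IsMetricConvex δ C := by
  simp only [IsMetricConvex, ← mul_add, mul_right_inj' hw]

end MetricConvex

section LinearOrder

variable {G : Type*} [AddCommGroup G] [LinearOrder G] [IsOrderedAddMonoid G]

theorem abs_sub_add_abs_sub_eq_iff_mem_uIcc {a b c : G} :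
    |a - c| + |c - b| = |a - b| ↔ c ∈ Set.uIcc a b := by
  rw [← sub_add_sub_cancel a c b, eq_comm, abs_add_eq_add_abs_iff, Set.mem_uIcc]
  simp only [sub_nonneg, sub_nonpos]
  tauto

theorem isMetricConvex_abs_sub_iff_ordConnected {I : Set G} :
    IsMetricConvex (fun a b => |a - b|) I ↔ I.OrdConnected := by
  simp only [IsMetricConvex, abs_sub_add_abs_sub_eq_iff_mem_uIcc,
    Set.ordConnected_iff_uIcc_subset, Set.subset_def]

end LinearOrder

section Pi

variable {D : Type*} {X : D → Type*} {S : Set (∀ d, X d)}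

theorem eq_univ_pi_image_eval_of_update_mem [Finite D] [DecidableEq D] (hS : S.Nonempty)
    (hupdate : ∀ x ∈ S, ∀ z ∈ S, ∀ d, Function.update x d (z d) ∈ S) :
    S = Set.univ.pi fun d => Function.eval d '' S := by
  refine (Set.subset_pi_eval_image _ _).antisymm fun x hx => ?_
  have := Fintype.ofFinite D
  obtain ⟨y, hy⟩ := hS
  have piecewise_mem (T : Finset D) : T.piecewise x y ∈ S := by
    induction T using Finset.induction_on with
    | empty => simpa only [Finset.piecewise_empty] using hy
    | insert d T _ ih =>
      obtain ⟨z, hz, hzx : z d = x d⟩ := hx d (Set.mem_univ d)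
      rw [Finset.piecewise_insert, ← hzx]
      exact hupdate _ ih z hz d
  simpa only [Finset.piecewise_univ] using piecewise_mem Finset.univ

variable [Fintype D] {M : Type*} [AddCommMonoid M] {δ : ∀ d, X d → X d → M}

theorem IsMetricConvex.update_mem [DecidableEq D]
    (hS : IsMetricConvex (fun x y => ∑ d, δ d (x d) (y d)) S) (hself : ∀ d a, δ d a a = 0)
    {x z : ∀ d, X d} (hx : x ∈ S) (hz : z ∈ S) {d : D} {c : X d}
    (hc : δ d (x d) c + δ d c (z d) = δ d (x d) (z d)) : Function.update x d c ∈ S := by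
  refine hS x hx z hz _ ?_
  rw [← Finset.sum_add_distrib]
  refine Finset.sum_congr rfl fun e _ => ?_
  obtain rfl | hne := eq_or_ne e d
  · simpa only [Function.update_self] using hc
  · rw [Function.update_of_ne hne, hself, zero_add]

theorem IsMetricConvex.image_eval
    (hS : IsMetricConvex (fun x y => ∑ d, δ d (x d) (y d)) S) (hself : ∀ d a, δ d a a = 0)
    (d : D) : IsMetricConvex (δ d) (Function.eval d '' S) := by
  classical
  rintro _ ⟨x, hx, rfl⟩ _ ⟨z, hz, rfl⟩ c hc
  exact ⟨Function.update x d c, hS.update_mem hself hx hz hc, Function.update_self ..⟩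

variable [PartialOrder M] [IsOrderedCancelAddMonoid M]

theorem sum_add_sum_eq_sum_iff_of_triangle
    (htri : ∀ d a b c, δ d a c ≤ δ d a b + δ d b c) {x y z : ∀ d, X d} :
    ∑ d, δ d (x d) (y d) + ∑ d, δ d (y d) (z d) = ∑ d, δ d (x d) (z d) ↔
      ∀ d, δ d (x d) (y d) + δ d (y d) (z d) = δ d (x d) (z d) := by
  rw [← Finset.sum_add_distrib, eq_comm, Finset.sum_eq_sum_iff_of_le fun d _ => htri d _ _ _]
  exact ⟨fun h d => (h d (Finset.mem_univ d)).symm, fun h d _ => (h d).symm⟩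

theorem IsMetricConvex.univ_pi (htri : ∀ d a b c, δ d a c ≤ δ d a b + δ d b c)
    {I : ∀ d, Set (X d)} (hI : ∀ d, IsMetricConvex (δ d) (I d)) :
    IsMetricConvex (fun x y => ∑ d, δ d (x d) (y d)) (Set.univ.pi I) :=
  fun x hx z hz y hy d hd => hI d (x d) (hx d hd) (z d) (hz d hd) (y d)
    ((sum_add_sum_eq_sum_iff_of_triangle htri).1 hy d)

theorem isMetricConvex_sum_iff_exists_univ_pi (hself : ∀ d a, δ d a a = 0)
    (htri : ∀ d a b c, δ d a c ≤ δ d a b + δ d b c) (hS : S.Nonempty) :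
    IsMetricConvex (fun x y => ∑ d, δ d (x d) (y d)) S ↔
      ∃ I : ∀ d, Set (X d), (∀ d, IsMetricConvex (δ d) (I d)) ∧ S = Set.univ.pi I := by
  classical
  constructor
  · intro hconv
    refine ⟨fun d => Function.eval d '' S, hconv.image_eval hself,
      eq_univ_pi_image_eval_of_update_mem hS fun x hx z hz d => ?_⟩
    exact hconv.update_mem hself hx hz (by rw [hself, add_zero])
  · rintro ⟨I, hI, rfl⟩
    exact .univ_pi htri hI

end Pi

theorem manhattan_convex_iff_cuboid_general
    {D K : Type*} [Fintype D] [Ring K] [LinearOrder K] [IsStrictOrderedRing K]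
    {w : D → K} (hw : ∀ d, 0 < w d) {S : Set (D → K)} (hS : S.Nonempty) :
    IsMetricConvex (fun x y => ∑ d, w d * |x d - y d|) S ↔
      ∃ I : D → Set K, (∀ d, (I d).OrdConnected) ∧ S = Set.univ.pi I := by
  have hself (d : D) (a : K) : w d * |a - a| = 0 := by rw [sub_self, abs_zero, mul_zero]
  have htri (d : D) (a b c : K) : w d * |a - c| ≤ w d * |a - b| + w d * |b - c| := by
    rw [← mul_add]
    exact mul_le_mul_of_nonneg_left (abs_sub_le a b c) (hw d).le
  simp only [isMetricConvex_sum_iff_exists_univ_pi hself htri hS,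
    isMetricConvex_const_mul_iff (hw _).ne', isMetricConvex_abs_sub_iff_ordConnected]

/-- A nonempty set is convex under the weighted Manhattan metric
iff it is an axis-parallel cuboid, i.e. a product of order-convex subsets of
ℝ (intervals, possibly unbounded). -/
theorem manhattan_convex_iff_cuboid
    {D : Type*} [Fintype D] [Nonempty D]
    (w : D → ℝ) (hw : ∀ d, 0 < w d)
    (S : Set (D → ℝ)) (hS : S.Nonempty) :
    (∀ x ∈ S, ∀ z ∈ S, ∀ y : D → ℝ,
        (∑ d, w d * |x d - y d|) + (∑ d, w d * |y d - z d|) =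
          (∑ d, w d * |x d - z d|) → y ∈ S) ↔
    ∃ I : D → Set ℝ,
      (∀ d, ∀ a ∈ I d, ∀ b ∈ I d, ∀ c : ℝ, a ≤ c → c ≤ b → c ∈ I d) ∧
      S = {x : D → ℝ | ∀ d, x d ∈ I d} := by
  simpa only [IsMetricConvex, Set.ordConnected_def, Set.subset_def, Set.mem_Icc, and_imp,
    Set.pi, Set.mem_univ, true_imp_iff] using manhattan_convex_iff_cuboid_general hw hS
end

section
/- Let D be a finite nonempty index set with n = |D|, partitioned into a collection Δ of nonempty domains δ ⊆ D with n_δ = |δ|, and let w_δ > 0 and w_d > 0 be positive weights. Let d_C(x,y) = Σ_{δ∈Δ} w_δ · √(Σ_{d∈δ} w_d·(x_d − y_d)²) and for d ∈ D write δ(d) for the unique domain containing d. Then for every r > 0, the n-dimensional Lebesgue measure of the ball {x ∈ ℝ^D : d_C(x,0) ≤ r} equals (1 / ∏_{d∈D} (w_{δ(d)} · √(w_d))) · (rⁿ / n!) · ∏_{δ∈Δ} ( n_δ! · π^{n_δ/2} / Γ(n_δ/2 + 1) ). -/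
open Finset

/-!
Integrating `exp (-‖x‖ ^ p)` over an `n`-dimensional normed space with Haar measure `μ` gives
`Γ (n / p + 1) * μ (ball 0 1)`. On an `ℓ^p` sum of normed spaces this integrand is a product over
the summands, so by Fubini the volume of the unit ball of the sum is determined by the volumes of
the unit balls of the summands. The coordinate scaling `x d ↦ w_{δ(d)} * √(w_d) * x d` carries the
ball of `d_C` to the ball of an `ℓ¹` sum of Euclidean spaces, which is the case `p = 1`.
-/

section

open MeasureTheory Measure Module Metric WithLp
open scoped ENNReal Real

section LpSum

theorem finrank_piLp {R ι : Type*} [Fintype ι] [Semiring R] [StrongRankCondition R] {M : ι → Type*}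
    [∀ i, AddCommGroup (M i)] [∀ i, Module R (M i)] [∀ i, Module.Free R (M i)]
    [∀ i, Module.Finite R (M i)] (p : ℝ≥0∞) : finrank R (PiLp p M) = ∑ i, finrank R (M i) :=
  (WithLp.linearEquiv p R (∀ i, M i)).finrank_eq.trans (finrank_pi_fintype R)

theorem integral_exp_neg_norm_rpow {E : Type*} [NormedAddCommGroup E] [NormedSpace ℝ E]
    [FiniteDimensional ℝ E] [MeasurableSpace E] [BorelSpace E] (μ : Measure E)
    [IsAddHaarMeasure μ] {p : ℝ} (hp : 0 < p) :
    ∫ x, Real.exp (-‖x‖ ^ p) ∂μ =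
      Real.Gamma (finrank ℝ E / p + 1) * μ.real (ball (0 : E) 1) := by
  have hΓ : 0 < Real.Gamma (finrank ℝ E / p + 1) := Real.Gamma_pos_of_pos (by positivity)
  rw [measureReal_def, measure_unitBall_eq_integral_div_gamma μ hp,
    ENNReal.toReal_ofReal (by positivity), mul_div_cancel₀ _ hΓ.ne']

variable {ι : Type*} [Fintype ι] {E : ι → Type*} [∀ i, NormedAddCommGroup (E i)]
  [∀ i, MeasurableSpace (E i)] (μ : ∀ i, Measure (E i)) {p : ℝ≥0∞}

theorem integral_exp_neg_norm_rpow_piLp [∀ i, SigmaFinite (μ i)] (hp : 0 < p.toReal) :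
    ∫ x, Real.exp (-‖x‖ ^ p.toReal) ∂(Measure.pi μ).map (toLp p) =
      ∏ i, ∫ x, Real.exp (-‖x‖ ^ p.toReal) ∂μ i := by
  have hnorm (y : ∀ i, E i) : ‖toLp p y‖ ^ p.toReal = ∑ i, ‖y i‖ ^ p.toReal := by
    rw [PiLp.norm_eq_sum hp, ← Real.rpow_mul (by positivity), one_div_mul_cancel hp.ne',
      Real.rpow_one]
  rw [← MeasurableEquiv.coe_toLp, integral_map_equiv]
  simp_rw [MeasurableEquiv.coe_toLp, hnorm, ← Finset.sum_neg_distrib, Real.exp_sum]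
  exact integral_fintype_prod_eq_prod fun i (x : E i) ↦ Real.exp (-‖x‖ ^ p.toReal)

variable [∀ i, NormedSpace ℝ (E i)] [∀ i, FiniteDimensional ℝ (E i)] [∀ i, BorelSpace (E i)]
  [∀ i, IsAddHaarMeasure (μ i)] [Fact (1 ≤ p)]

instance isAddHaarMeasure_map_pi_toLp : IsAddHaarMeasure ((Measure.pi μ).map (toLp p)) :=
  (PiLp.continuousLinearEquiv p ℝ E).symm.isAddHaarMeasure_map (Measure.pi μ)

theorem measureReal_closedBall_piLp (hp : p ≠ ∞) (x : PiLp p E) {r : ℝ} (hr : 0 ≤ r) :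
    ((Measure.pi μ).map (toLp p)).real (closedBall x r) =
      r ^ (∑ i, finrank ℝ (E i)) / Real.Gamma ((∑ i, finrank ℝ (E i) : ℕ) / p.toReal + 1) *
        ∏ i, Real.Gamma (finrank ℝ (E i) / p.toReal + 1) * (μ i).real (ball 0 1) := by
  have hp₀ : 0 < p.toReal := ENNReal.toReal_pos (zero_lt_one.trans_le Fact.out).ne' hp
  have hball : ∏ i, Real.Gamma (finrank ℝ (E i) / p.toReal + 1) * (μ i).real (ball 0 1) =
      Real.Gamma ((∑ i, finrank ℝ (E i) : ℕ) / p.toReal + 1) *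
        ((Measure.pi μ).map (toLp p)).real (ball 0 1) := by
    simp_rw [← integral_exp_neg_norm_rpow _ hp₀, ← integral_exp_neg_norm_rpow_piLp μ hp₀,
      integral_exp_neg_norm_rpow _ hp₀, finrank_piLp]
  have hΓ : 0 < Real.Gamma ((∑ i, finrank ℝ (E i) : ℕ) / p.toReal + 1) :=
    Real.Gamma_pos_of_pos (by positivity)
  rw [addHaar_real_closedBall _ _ hr, finrank_piLp, hball, ← mul_assoc,
    div_mul_cancel₀ _ hΓ.ne']

end LpSum

theorem measureReal_unitBall_euclideanSpace (κ : Type*) [Fintype κ] :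
    (volume : Measure (EuclideanSpace ℝ κ)).real (ball 0 1) =
      π ^ ((Fintype.card κ : ℝ) / 2) / Real.Gamma ((Fintype.card κ : ℝ) / 2 + 1) := by
  cases isEmpty_or_nonempty κ
  · simp [measureReal_def, volume_euclideanSpace_eq_dirac]
  · rw [measureReal_def, EuclideanSpace.volume_ball, ENNReal.ofReal_one, one_pow,
      one_mul, ENNReal.toReal_ofReal (by positivity), Real.sqrt_eq_rpow,
      ← Real.rpow_mul_natCast Real.pi_nonneg, one_div_mul_eq_div]

section Fibers

variable {D ι : Type*} {X : D → Type*} {bl : D → ι}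

/-- The family indexed by `D` whose restriction to each fiber of `bl` is the given one; it
identifies the product over the fibers with the product over `D`. -/
def glueFibers (y : ∀ j, ∀ d : {d // bl d = j}, X d) (d : D) : X d :=
  y (bl d) ⟨d, rfl⟩

theorem glueFibers_apply_coe (y : ∀ j, ∀ d : {d // bl d = j}, X d) (j : ι)
    (d : {d // bl d = j}) : glueFibers y d = y j d := by
  obtain ⟨d, rfl⟩ := d
  rfl

theorem preimage_glueFibers_univ_pi (s : ∀ d, Set (X d)) :
    glueFibers ⁻¹' Set.univ.pi s =
      Set.univ.pi fun j ↦ Set.univ.pi fun d : {d // bl d = j} ↦ s d := by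
  ext y
  simp only [Set.mem_preimage, Set.mem_univ_pi]
  exact ⟨fun h j d ↦ glueFibers_apply_coe y j d ▸ h d, fun h d ↦ h (bl d) ⟨d, rfl⟩⟩

theorem measurePreserving_glueFibers [Fintype D] [Fintype ι] [DecidableEq ι]
    [∀ d, MeasurableSpace (X d)] (μ : ∀ d, Measure (X d)) [∀ d, SigmaFinite (μ d)] :
    MeasurePreserving (glueFibers (bl := bl))
      (Measure.pi fun _ ↦ Measure.pi fun d ↦ μ d) (Measure.pi μ) := by
  have hm : Measurable (glueFibers (X := X) (bl := bl)) := by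
    unfold glueFibers
    fun_prop
  refine ⟨hm, (Measure.pi_eq fun s hs ↦ ?_).symm⟩
  rw [Measure.map_apply hm (.univ_pi hs), preimage_glueFibers_univ_pi]
  simp_rw [Measure.pi_pi]
  exact Fintype.prod_fiberwise bl fun d ↦ μ d (s d)

end Fibers

section MixedNorm

variable {D ι : Type*} [Fintype D] [Fintype ι] [DecidableEq ι] (bl : D → ι)

/-- The mixed `ℓ¹(ℓ²)` norm: the sum of the Euclidean norms of the restrictions of `x` to the
fibers of `bl`. It is `x ↦ d_C(x, 0)` for unit weights. -/
noncomputable def mixedNorm (x : D → ℝ) : ℝ :=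
  ∑ j, √(∑ d with bl d = j, x d ^ 2)

theorem continuous_mixedNorm : Continuous (mixedNorm bl) := by
  unfold mixedNorm
  fun_prop

variable {bl}

theorem mixedNorm_glueFibers (y : ∀ j, EuclideanSpace ℝ {d // bl d = j}) :
    mixedNorm bl (glueFibers fun j ↦ (y j).ofLp) = ‖toLp 1 y‖ := by
  simp_rw [PiLp.norm_eq_of_L1, EuclideanSpace.norm_eq, Real.norm_eq_abs, sq_abs, mixedNorm]
  refine Finset.sum_congr rfl fun j _ ↦ congrArg Real.sqrt ?_
  rw [Finset.sum_subtype (p := (bl · = j)) _ (by simp)]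
  exact Finset.sum_congr rfl fun d _ ↦ by rw [glueFibers_apply_coe]

theorem mixedNorm_mul {wδ : ι → ℝ} {wd : D → ℝ} (hwδ : ∀ j, 0 ≤ wδ j) (hwd : ∀ d, 0 ≤ wd d)
    (x : D → ℝ) :
    mixedNorm bl ((fun d ↦ wδ (bl d) * √(wd d)) * x) =
      ∑ j, wδ j * √(∑ d with bl d = j, wd d * x d ^ 2) := by
  refine Finset.sum_congr rfl fun j _ ↦ ?_
  rw [← Real.sqrt_sq (hwδ j), ← Real.sqrt_mul (sq_nonneg _), Finset.mul_sum]
  refine congrArg Real.sqrt (Finset.sum_congr rfl fun d hd ↦ ?_)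
  rw [Pi.mul_apply, (Finset.mem_filter.mp hd).2, mul_pow, mul_pow, Real.sq_sqrt (hwd d), mul_assoc]

theorem measurePreserving_glueFibers_ofLp :
    MeasurePreserving fun y : ∀ j, EuclideanSpace ℝ {d // bl d = j} ↦
      glueFibers (X := fun _ ↦ ℝ) fun j ↦ (y j).ofLp :=
  (measurePreserving_glueFibers fun _ : D ↦ (volume : Measure ℝ)).comp
    (volume_preserving_pi fun j ↦ PiLp.volume_preserving_ofLp {d // bl d = j})

theorem sum_card_fiber : ∑ j, Fintype.card {d // bl d = j} = Fintype.card D := by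
  rw [← Fintype.card_sigma, Fintype.card_congr (Equiv.sigmaFiberEquiv bl)]

theorem volume_mixedNorm_le_eq_map_closedBall (r : ℝ) :
    volume {x | mixedNorm bl x ≤ r} =
      (Measure.pi fun j ↦ (volume : Measure (EuclideanSpace ℝ {d // bl d = j}))).map (toLp 1)
        (closedBall 0 r) := by
  have hmeas : MeasurableSet {x | mixedNorm bl x ≤ r} :=
    (isClosed_le (continuous_mixedNorm bl) continuous_const).measurableSet
  rw [← (measurePreserving_glueFibers_ofLp (bl := bl)).measure_preimage hmeas.nullMeasurableSet,
    Measure.map_apply (measurable_toLp 1 _) isClosed_closedBall.measurableSet, volume_pi]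
  congr 1
  ext y
  simp only [Set.mem_preimage, Set.mem_ofPred_eq, mixedNorm_glueFibers, mem_closedBall_zero_iff]

theorem volume_mixedNorm_le {r : ℝ} (hr : 0 ≤ r) :
    volume {x | mixedNorm bl x ≤ r} =
      ENNReal.ofReal (r ^ Fintype.card D / (Fintype.card D).factorial *
        ∏ j, (Fintype.card {d // bl d = j}).factorial *
          π ^ ((Fintype.card {d // bl d = j} : ℝ) / 2) /
          Real.Gamma ((Fintype.card {d // bl d = j} : ℝ) / 2 + 1)) := by
  rw [volume_mixedNorm_le_eq_map_closedBall, ← ofReal_measureReal measure_closedBall_lt_top.ne,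
    measureReal_closedBall_piLp _ ENNReal.one_ne_top 0 hr]
  simp_rw [finrank_euclideanSpace, sum_card_fiber, measureReal_unitBall_euclideanSpace,
    ENNReal.toReal_one, div_one, Real.Gamma_nat_eq_factorial, mul_div_assoc]

end MixedNorm

theorem volume_pi_preimage_mul_left {ι : Type*} [Fintype ι] {c : ι → ℝ} (hc : ∀ i, c i ≠ 0)
    (s : Set (ι → ℝ)) :
    volume ((c * ·) ⁻¹' s) = ENNReal.ofReal |(∏ i, c i)⁻¹| * volume s := by
  classical
  have hL : ⇑(Matrix.toLin' (Matrix.diagonal c)) = (c * ·) := by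
    ext x i
    simp [Matrix.mulVec_diagonal]
  have hdet : LinearMap.det (Matrix.toLin' (Matrix.diagonal c)) = ∏ i, c i := by
    rw [LinearMap.det_toLin', Matrix.det_diagonal]
  rw [← hL, addHaar_preimage_linearMap _ ?_, hdet]
  exact hdet ▸ Finset.prod_ne_zero_iff.mpr fun i _ ↦ hc i

end

/-- The Lebesgue volume of a ball of radius r around the origin
under the combined metric d_C equals
(1/∏_d w_{δ(d)}·√w_d) · (rⁿ/n!) · ∏_{δ∈Δ} (n_δ!·π^{n_δ/2}/Γ(n_δ/2+1)).
The partition of `D` into nonempty domains is given by the fibers of the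
surjective block map `bl : D → ι`; `δ(d)` is `bl d` and
`n_δ` is the cardinality of the fiber. -/
theorem volume_ball_combined_metric
    {D ι : Type*} [Fintype D] [Nonempty D] [Fintype ι] [DecidableEq ι]
    (bl : D → ι) (hbl : Function.Surjective bl)
    (wδ : ι → ℝ) (wd : D → ℝ)
    (hwδ : ∀ j, 0 < wδ j) (hwd : ∀ d, 0 < wd d)
    (dC : (D → ℝ) → (D → ℝ) → ℝ)
    (hdC : ∀ x y, dC x y = ∑ j : ι, wδ j *
      Real.sqrt (∑ d ∈ univ.filter (fun d => bl d = j), wd d * (x d - y d) ^ 2))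
    (n : ℕ) (hn : n = Fintype.card D)
    (nδ : ι → ℕ) (hnδ : ∀ j, nδ j = (univ.filter (fun d => bl d = j)).card)
    (r : ℝ) (hr : 0 < r) :
    MeasureTheory.volume {x : D → ℝ | dC x 0 ≤ r} =
      ENNReal.ofReal
        ((1 / ∏ d : D, (wδ (bl d) * Real.sqrt (wd d))) *
          (r ^ n / (Nat.factorial n : ℝ)) *
          ∏ j : ι, ((Nat.factorial (nδ j) : ℝ) *
            Real.pi ^ ((nδ j : ℝ) / 2) / Real.Gamma ((nδ j : ℝ) / 2 + 1))) := by
  let c : D → ℝ := fun d ↦ wδ (bl d) * √(wd d)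
  have hc (d : D) : 0 < c d := mul_pos (hwδ _) (Real.sqrt_pos.2 (hwd d))
  have hball : {x : D → ℝ | dC x 0 ≤ r} = (c * ·) ⁻¹' {x | mixedNorm bl x ≤ r} := by
    ext x
    simp only [Set.mem_ofPred_eq, Set.mem_preimage, hdC, Pi.zero_apply, sub_zero, c,
      mixedNorm_mul (fun j ↦ (hwδ j).le) (fun d ↦ (hwd d).le)]
  have hcard (j : ι) : nδ j = Fintype.card {d // bl d = j} := by
    rw [hnδ, Fintype.card_subtype]
  rw [hball, volume_pi_preimage_mul_left fun d ↦ (hc d).ne', volume_mixedNorm_le hr.le,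
    ← ENNReal.ofReal_mul (abs_nonneg _), abs_of_pos (inv_pos.2 (prod_pos fun d _ ↦ hc d)), ← hn]
  simp only [hcard, one_div, mul_assoc, c]
end

section
/- Let D be a finite nonempty index set partitioned into a collection Δ of nonempty domains δ ⊆ D, with positive weights w_δ > 0 and w_d > 0, and let d_C(x,y) = Σ_{δ∈Δ} w_δ · √(Σ_{d∈δ} w_d·(x_d − y_d)²); for d ∈ D write δ(d) for the unique domain containing d. Let C = {x ∈ ℝ^D : ∀d, p⁻_d ≤ x_d ≤ p⁺_d} be a nonempty axis-parallel cuboid with side lengths b_d = p⁺_d − p⁻_d. Then for every ε > 0, the Lebesgue measure of the ε-neighborhood {x ∈ ℝ^D : inf_{y∈C} d_C(x,y) ≤ ε} equals Σ_{T⊆D} ( ∏_{d ∈ D∖T} b_d ) · (1 / ∏_{d∈T} (w_{δ(d)} · √(w_d))) · (ε^{|T|} / |T|!) · ∏_{δ∈Δ, δ∩T ≠ ∅} ( |δ∩T|! · π^{|δ∩T|/2} / Γ(|δ∩T|/2 + 1) ), where the sum runs over all subsets T of D (with the empty product equal to 1). -/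
open Finset

/-!
The combined metric is induced by a norm that is monotone in each `|v d|`, so `a ⊔ (b ⊓ x)` is a
nearest point to `x` of the cuboid `[a, b]`, and the `ε`-neighborhood is the preimage of the closed
`ε`-ball of this norm under the displacement `x ↦ x - a ⊔ (b ⊓ x)`. In each coordinate the
displacement pushes Lebesgue measure forward to `Lebesgue + (b d - a d) • δ₀`. Expanding the product
of these measures gives a sum over `T`, whose terms are the side lengths outside `T` times the
volume of the ball in the coordinates of `T`. Finally, a norm `g` on an `n`-dimensional space
satisfies `∫ exp (-g) = n! * vol {g ≤ 1}`, and for the combined norm the integral factors over the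
domains.
-/

section ExpNegNorm

open MeasureTheory Module

theorem integral_exp_neg_norm {E : Type*} [NormedAddCommGroup E] [NormedSpace ℝ E]
    [FiniteDimensional ℝ E] [MeasurableSpace E] [BorelSpace E] (μ : Measure E)
    [μ.IsAddHaarMeasure] :
    ∫ x, Real.exp (-‖x‖) ∂μ = (finrank ℝ E).factorial * μ.real (Metric.ball 0 1) := by
  have h_ball := measure_unitBall_eq_integral_div_gamma μ one_pos
  simp only [Real.rpow_one, div_one, Real.Gamma_nat_eq_factorial] at h_ball
  rw [measureReal_def, h_ball, ENNReal.toReal_ofReal (by positivity),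
    mul_div_cancel₀ _ (by positivity)]

variable {ι : Type*} [Fintype ι] {E : ι → Type*} [∀ i, NormedAddCommGroup (E i)]
  [∀ i, NormedSpace ℝ (E i)] [∀ i, FiniteDimensional ℝ (E i)] [∀ i, MeasurableSpace (E i)]
  [∀ i, BorelSpace (E i)] (μ : ∀ i, Measure (E i)) [∀ i, (μ i).IsAddHaarMeasure]

theorem integral_pi_exp_neg_sum_norm :
    ∫ x, Real.exp (-∑ i, ‖x i‖) ∂Measure.pi μ =
      ∏ i, (finrank ℝ (E i)).factorial * (μ i).real (Metric.ball 0 1) := by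
  simp_rw [← integral_exp_neg_norm, ← sum_neg_distrib, Real.exp_sum]
  exact integral_fintype_prod_eq_prod fun i (v : E i) => Real.exp (-‖v‖)

theorem measure_pi_sum_norm_le_one :
    Measure.pi μ {x | ∑ i, ‖x i‖ ≤ 1} = ENNReal.ofReal
      ((∏ i, (finrank ℝ (E i)).factorial * (μ i).real (Metric.ball 0 1)) /
        (∑ i, finrank ℝ (E i)).factorial) := by
  have map_zero : ∑ i, ‖(0 : ∀ i, E i) i‖ = 0 := by simp
  have map_neg (x : ∀ i, E i) : ∑ i, ‖(-x) i‖ = ∑ i, ‖x i‖ := by simp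
  have map_add_le (x y : ∀ i, E i) : ∑ i, ‖(x + y) i‖ ≤ ∑ i, ‖x i‖ + ∑ i, ‖y i‖ := by
    rw [← sum_add_distrib]
    exact sum_le_sum fun i _ => norm_add_le _ _
  have eq_zero {x : ∀ i, E i} (hx : ∑ i, ‖x i‖ = 0) : x = 0 := by
    rw [sum_eq_zero_iff_of_nonneg fun i _ => norm_nonneg _] at hx
    exact funext fun i => norm_eq_zero.1 (hx i (mem_univ i))
  have map_smul_le (r : ℝ) (x : ∀ i, E i) : ∑ i, ‖(r • x) i‖ ≤ |r| * ∑ i, ‖x i‖ := by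
    simp [norm_smul, mul_sum]
  have le_eq_lt : Measure.pi μ {x | ∑ i, ‖x i‖ ≤ 1} = Measure.pi μ {x | ∑ i, ‖x i‖ < 1} := by
    rcases subsingleton_or_nontrivial (∀ i, E i) with _ | _
    · simp [Subsingleton.elim _ (0 : ∀ i, E i)]
    · exact measure_le_eq_lt (Measure.pi μ) map_zero map_neg map_add_le eq_zero map_smul_le 1
  rw [le_eq_lt, measure_lt_one_eq_integral_div_gamma (Measure.pi μ) map_zero map_neg map_add_le
    eq_zero map_smul_le one_pos]
  simp only [Real.rpow_one, div_one, integral_pi_exp_neg_sum_norm, finrank_pi_fintype,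
    Real.Gamma_nat_eq_factorial]

theorem volume_real_euclideanUnitBall (F : Type*) [Fintype F] :
    volume.real (Metric.ball (0 : EuclideanSpace ℝ F) 1) =
      Real.pi ^ ((Fintype.card F : ℝ) / 2) / Real.Gamma ((Fintype.card F : ℝ) / 2 + 1) := by
  rcases isEmpty_or_nonempty F with _ | _
  · simp [volume_euclideanSpace_eq_dirac, measureReal_def]
  · rw [measureReal_def, EuclideanSpace.volume_ball, ENNReal.ofReal_one, one_pow, one_mul,
      ENNReal.toReal_ofReal (by positivity), Real.sqrt_eq_rpow,
      ← Real.rpow_mul_natCast Real.pi_nonneg, one_div_mul_eq_div]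

end ExpNegNorm

section Fiberwise

open MeasureTheory

variable {D ι : Type*} [Fintype D] [Fintype ι] [DecidableEq ι] (bl : D → ι)

theorem measurePreserving_pi_fiberwise {X : D → Type*} [∀ d, MeasurableSpace (X d)]
    (μ : ∀ d, Measure (X d)) [∀ d, SigmaFinite (μ d)] :
    MeasurePreserving
      (fun (y : ∀ j, ∀ d : {d // bl d = j}, X d) (d : D) => y (bl d) ⟨d, rfl⟩)
      (Measure.pi fun j => Measure.pi fun d : {d // bl d = j} => μ d) (Measure.pi μ) := by
  have hm : Measurable
      fun (y : ∀ j, ∀ d : {d // bl d = j}, X d) (d : D) => y (bl d) ⟨d, rfl⟩ := by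
    fun_prop
  refine ⟨hm, (Measure.pi_eq fun s hs => ?_).symm⟩
  have preimage_eq : (fun (y : ∀ j, ∀ d : {d // bl d = j}, X d) (d : D) => y (bl d) ⟨d, rfl⟩) ⁻¹'
        Set.univ.pi s = Set.univ.pi fun j => Set.univ.pi fun d : {d // bl d = j} => s d := by
    ext y
    simp only [Set.mem_preimage, Set.mem_univ_pi, Subtype.forall]
    exact ⟨by rintro h _ d rfl; exact h d, fun h d => h _ d rfl⟩
  rw [Measure.map_apply hm (.univ_pi hs), preimage_eq]
  simp_rw [Measure.pi_pi]
  exact Fintype.prod_fiberwise bl fun d => μ d (s d)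

end Fiberwise

section IccDisplacement

open MeasureTheory

/-- The displacement of `x` from `a ⊔ (b ⊓ x)`, its nearest point in the interval `[a, b]`; for
functions `a ≤ b` this is the displacement from the nearest point of a cuboid. -/
def iccDisplacement {α : Type*} [Lattice α] [Sub α] (a b x : α) : α :=
  x - a ⊔ (b ⊓ x)

theorem iccDisplacement_of_le_left {α : Type*} [Lattice α] [Sub α] {a x : α} (b : α) (hx : x ≤ a) :
    iccDisplacement a b x = x - a := by
  rw [iccDisplacement, sup_eq_left.2 (inf_le_right.trans hx)]

theorem iccDisplacement_of_right_le {α : Type*} [Lattice α] [Sub α] {a b x : α} (hab : a ≤ b)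
    (hx : b ≤ x) : iccDisplacement a b x = x - b := by
  rw [iccDisplacement, inf_eq_left.2 hx, sup_eq_right.2 hab]

theorem iccDisplacement_of_mem_Icc {α : Type*} [Lattice α] [AddGroup α] {a b x : α}
    (hx : x ∈ Set.Icc a b) : iccDisplacement a b x = 0 := by
  rw [iccDisplacement, inf_eq_right.2 hx.2, sup_eq_right.2 hx.1, sub_self]

theorem abs_iccDisplacement_le {α : Type*} [AddCommGroup α] [LinearOrder α] [IsOrderedAddMonoid α]
    {a b y : α} (hy : y ∈ Set.Icc a b) (x : α) : |iccDisplacement a b x| ≤ |x - y| := by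
  obtain ⟨hay, hyb⟩ := hy
  unfold iccDisplacement
  grind

theorem measurable_iccDisplacement {α : Type*} [Lattice α] [Sub α] [MeasurableSpace α]
    [MeasurableSub₂ α] [MeasurableSup₂ α] [MeasurableInf₂ α] (a b : α) :
    Measurable (iccDisplacement a b) := by
  unfold iccDisplacement
  fun_prop

theorem map_iccDisplacement_restrict_Iio (a b : ℝ) :
    (volume.restrict (Set.Iio a)).map (iccDisplacement a b) = volume.restrict (Set.Iio 0) := by
  have eq_sub : ∀ t ∈ Set.Iio a, iccDisplacement a b t = t - a :=
    fun t ht => iccDisplacement_of_le_left b ht.out.le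
  rw [Measure.map_congr (ae_restrict_of_forall_mem measurableSet_Iio eq_sub)]
  simpa using ((measurePreserving_sub_right volume a).restrict_preimage
    (measurableSet_Iio (a := 0))).map_eq

theorem map_iccDisplacement_restrict_Icc (a b : ℝ) :
    (volume.restrict (Set.Icc a b)).map (iccDisplacement a b) =
      (b - a).toNNReal • Measure.dirac 0 := by
  rw [Measure.map_congr (ae_restrict_of_forall_mem measurableSet_Icc
    fun _ => iccDisplacement_of_mem_Icc), Measure.map_const, Measure.restrict_apply_univ,
    Real.volume_Icc]
  rfl

theorem map_iccDisplacement_restrict_Ioi {a b : ℝ} (hab : a ≤ b) :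
    (volume.restrict (Set.Ioi b)).map (iccDisplacement a b) = volume.restrict (Set.Ioi 0) := by
  have eq_sub : ∀ t ∈ Set.Ioi b, iccDisplacement a b t = t - b :=
    fun t ht => iccDisplacement_of_right_le hab ht.out.le
  rw [Measure.map_congr (ae_restrict_of_forall_mem measurableSet_Ioi eq_sub)]
  simpa using ((measurePreserving_sub_right volume b).restrict_preimage
    (measurableSet_Ioi (a := 0))).map_eq

theorem map_iccDisplacement_volume {a b : ℝ} (hab : a ≤ b) :
    (volume : Measure ℝ).map (iccDisplacement a b) =
      volume + (b - a).toNNReal • Measure.dirac 0 := by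
  have split_at_Icc : (volume : Measure ℝ) = volume.restrict (Set.Iio a) +
      volume.restrict (Set.Icc a b) + volume.restrict (Set.Ioi b) := by
    rw [← Measure.restrict_union _ measurableSet_Icc, Set.Iio_union_Icc_eq_Iic hab,
      ← Set.compl_Iic, Measure.restrict_add_restrict_compl measurableSet_Iic]
    exact Set.disjoint_left.2 fun t hta ht => hta.not_ge ht.1
  have split_at_zero : (volume : Measure ℝ) =
      volume.restrict (Set.Iio 0) + volume.restrict (Set.Ioi 0) := by
    rw [Measure.restrict_congr_set Ioi_ae_eq_Ici, ← Set.compl_Iio,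
      Measure.restrict_add_restrict_compl measurableSet_Iio]
  have hm := measurable_iccDisplacement a b
  nth_rw 1 [split_at_Icc]
  rw [Measure.map_add _ _ hm, Measure.map_add _ _ hm, map_iccDisplacement_restrict_Iio,
    map_iccDisplacement_restrict_Icc, map_iccDisplacement_restrict_Ioi hab, add_right_comm,
    ← split_at_zero]

variable {D : Type*} [Fintype D] [DecidableEq D]

section PiAddSMulDirac

open scoped NNReal

variable {X : D → Type*} [∀ d, MeasurableSpace (X d)] (μ : ∀ d, Measure (X d))
  [∀ d, SigmaFinite (μ d)]

theorem map_updateFinset_pi_univ_pi (a : ∀ d, X d) (T : Finset D) {s : ∀ d, Set (X d)}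
    (hs : ∀ d, MeasurableSet (s d)) :
    (Measure.pi fun d : T => μ d).map (Function.updateFinset a T) (Set.univ.pi s) =
      (∏ d ∈ T, μ d (s d)) * ∏ d ∈ Tᶜ, Measure.dirac (a d) (s d) := by
  rw [Measure.map_apply measurable_updateFinset (.univ_pi hs)]
  simp_rw [Measure.dirac_apply' _ (hs _)]
  by_cases ha : ∀ d ∉ T, a d ∈ s d
  · have preimage_eq : Function.updateFinset a T ⁻¹' Set.univ.pi s =
        Set.univ.pi fun d : T => s d := by
      ext u
      simp only [Set.mem_preimage, Set.mem_univ_pi, Function.updateFinset, Subtype.forall]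
      exact ⟨fun h d hd => by simpa [hd] using h d, fun h d => by split_ifs with hd <;> grind⟩
    rw [preimage_eq, Measure.pi_pi, prod_coe_sort T fun d => μ d (s d),
      prod_eq_one (s := Tᶜ) fun d hd => by simp [ha d (mem_compl.1 hd)], mul_one]
  · push Not at ha
    obtain ⟨d, hd, had⟩ := ha
    have preimage_eq : Function.updateFinset a T ⁻¹' Set.univ.pi s = ∅ := by
      refine Set.eq_empty_of_forall_notMem fun u hu => had ?_
      simpa [Function.updateFinset, hd] using hu d (Set.mem_univ d)
    rw [preimage_eq, measure_empty, prod_eq_zero (mem_compl.2 hd) (by simp [had]), mul_zero]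

theorem pi_add_smul_dirac (c : D → ℝ≥0) (a : ∀ d, X d) :
    Measure.pi (fun d => μ d + c d • Measure.dirac (a d)) =
      ∑ T : Finset D, (∏ d ∈ Tᶜ, c d) •
        (Measure.pi fun d : T => μ d).map (Function.updateFinset a T) := by
  refine Measure.pi_eq fun s hs => ?_
  simp only [Measure.coe_finsetSum, Finset.sum_apply, Measure.smul_apply, Measure.add_apply,
    Fintype.prod_add, map_updateFinset_pi_univ_pi μ a _ hs, ENNReal.smul_def, smul_eq_mul,
    prod_mul_distrib, ENNReal.ofNNReal_finsetProd]
  exact sum_congr rfl fun T _ => mul_left_comm _ _ _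

end PiAddSMulDirac

theorem volume_preimage_iccDisplacement {a b : D → ℝ} (hab : a ≤ b) {S : Set (D → ℝ)}
    (hS : MeasurableSet S) :
    volume (iccDisplacement a b ⁻¹' S) =
      ∑ T : Finset D, ENNReal.ofReal (∏ d ∈ Tᶜ, (b d - a d)) *
        volume {u : T → ℝ | Function.updateFinset (0 : D → ℝ) T u ∈ S} := by
  have measurable_displacement : Measurable (iccDisplacement a b) := measurable_pi_lambda _ fun d =>
    (measurable_iccDisplacement (a d) (b d)).comp (measurable_pi_apply d)
  have (d : D) : SigmaFinite ((volume : Measure ℝ).map (iccDisplacement (a d) (b d))) := by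
    rw [map_iccDisplacement_volume (hab d)]
    infer_instance
  have map_volume : (volume : Measure (D → ℝ)).map (iccDisplacement a b) =
      ∑ T : Finset D, (∏ d ∈ Tᶜ, (b d - a d).toNNReal) •
        (volume : Measure (T → ℝ)).map (Function.updateFinset (0 : D → ℝ) T) :=
    calc (volume : Measure (D → ℝ)).map (iccDisplacement a b)
      _ = Measure.pi fun d => (volume : Measure ℝ).map (iccDisplacement (a d) (b d)) :=
        Measure.pi_map_pi (f := fun d => iccDisplacement (a d) (b d)) fun d =>
          (measurable_iccDisplacement _ _).aemeasurable
      _ = _ := by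
        simp_rw [map_iccDisplacement_volume (hab _)]
        exact pi_add_smul_dirac _ _ 0
  rw [← Measure.map_apply measurable_displacement hS, map_volume]
  simp only [Measure.coe_finsetSum, Finset.sum_apply, Measure.smul_apply,
    Measure.map_apply measurable_updateFinset hS, ENNReal.smul_def, smul_eq_mul,
    ENNReal.ofNNReal_finsetProd, ENNReal.ofReal_prod_of_nonneg fun d _ => sub_nonneg.2 (hab d)]
  rfl

end IccDisplacement

section BallFactor

open MeasureTheory

/-- The contribution `n! * vol B` of a Euclidean unit `n`-ball `B`, which is `∫ exp (-‖x‖)` over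
`n`-dimensional Euclidean space. -/
noncomputable def ballFactor (n : ℕ) : ℝ :=
  n.factorial * Real.pi ^ ((n : ℝ) / 2) / Real.Gamma ((n : ℝ) / 2 + 1)

theorem ballFactor_zero : ballFactor 0 = 1 := by
  simp [ballFactor]

theorem ballFactor_nonneg (n : ℕ) : 0 ≤ ballFactor n := by
  unfold ballFactor
  positivity

theorem factorial_mul_volume_real_ball (F : Type*) [Fintype F] :
    (Fintype.card F).factorial * volume.real (Metric.ball (0 : EuclideanSpace ℝ F) 1) =
      ballFactor (Fintype.card F) := by
  rw [volume_real_euclideanUnitBall, ballFactor, mul_div_assoc]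

theorem prod_filter_ballFactor {D ι : Type*} [DecidableEq D] [Fintype ι] [DecidableEq ι]
    (bl : D → ι) (T : Finset D) :
    ∏ j with {d ∈ T | bl d = j} ≠ ∅, ballFactor #{d ∈ T | bl d = j} =
      ∏ j, ballFactor #{d ∈ T | bl d = j} :=
  prod_filter_of_ne fun j _ hj h_empty => hj (by rw [h_empty, card_empty, ballFactor_zero])

end BallFactor

section CombinedNorm

open MeasureTheory

variable {D ι : Type*} [Fintype D] [Fintype ι] [DecidableEq ι]

/-- The norm `v ↦ d_C(v, 0)` inducing the combined metric; the domains are the fibers of the block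
map `bl`. -/
noncomputable def combinedNorm (bl : D → ι) (wδ : ι → ℝ) (wd v : D → ℝ) : ℝ :=
  ∑ j, wδ j * √(∑ d with bl d = j, wd d * v d ^ 2)

variable (bl : D → ι)

theorem volume_sum_norm_fiber_le_one :
    volume {v : D → ℝ | ∑ j, ‖WithLp.toLp 2 fun d : {d // bl d = j} => v d‖ ≤ 1} =
      ENNReal.ofReal ((∏ j, ballFactor #{d | bl d = j}) / (Fintype.card D).factorial) := by
  have glue : MeasurePreserving
      (fun (x : ∀ j, EuclideanSpace ℝ {d // bl d = j}) d => x (bl d) ⟨d, rfl⟩) :=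
    (measurePreserving_pi_fiberwise bl fun _ => (volume : Measure ℝ)).comp
      (volume_preserving_pi fun j => PiLp.volume_preserving_ofLp {d // bl d = j})
  have preimage_eq : (fun (x : ∀ j, EuclideanSpace ℝ {d // bl d = j}) d => x (bl d) ⟨d, rfl⟩) ⁻¹'
        {v | ∑ j, ‖WithLp.toLp 2 fun d : {d // bl d = j} => v d‖ ≤ 1} =
      {x | ∑ j, ‖x j‖ ≤ 1} := by
    ext x
    have restrict_glue (j : ι) :
        (WithLp.toLp 2 fun d : {d // bl d = j} => x (bl d) ⟨d, rfl⟩) = x j := by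
      ext ⟨d, rfl⟩
      rfl
    simp [restrict_glue]
  have hm : MeasurableSet
      {v : D → ℝ | ∑ j, ‖WithLp.toLp 2 fun d : {d // bl d = j} => v d‖ ≤ 1} :=
    measurableSet_le (by fun_prop) measurable_const
  have sum_card : ∑ j, Fintype.card {d // bl d = j} = Fintype.card D := by
    rw [← Fintype.card_sigma, Fintype.card_congr (Equiv.sigmaFiberEquiv bl)]
  rw [← glue.measure_preimage hm.nullMeasurableSet, preimage_eq, volume_pi,
    measure_pi_sum_norm_le_one]
  simp only [finrank_euclideanSpace, factorial_mul_volume_real_ball, sum_card]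
  simp only [Fintype.card_subtype]

theorem volume_preimage_pi_mul_left (c : D → ℝ) (hc : ∀ d, c d ≠ 0) (S : Set (D → ℝ)) :
    volume ((c * ·) ⁻¹' S) = ENNReal.ofReal |∏ d, c d|⁻¹ * volume S := by
  classical
  have hdet : (LinearMap.mulLeft ℝ c).det = ∏ d, c d := by
    rw [← Matrix.det_diagonal, ← LinearMap.det_toLin']
    congr 1
    ext i d
    by_cases h : d = i <;> simp [h]
  rw [← abs_inv, ← hdet]
  exact Measure.addHaar_preimage_linearMap volume (hdet ▸ prod_ne_zero_iff.2 fun d _ => hc d) S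

theorem measurable_combinedNorm (wδ : ι → ℝ) (wd : D → ℝ) :
    Measurable (combinedNorm bl wδ wd) := by
  unfold combinedNorm
  fun_prop

variable {wδ : ι → ℝ} {wd : D → ℝ}

theorem combinedNorm_eq_sum_norm (hwδ : ∀ j, 0 ≤ wδ j) (hwd : ∀ d, 0 ≤ wd d) (v : D → ℝ) :
    combinedNorm bl wδ wd v =
      ∑ j, ‖WithLp.toLp 2 fun d : {d // bl d = j} => wδ (bl d) * √(wd d) * v d‖ := by
  refine sum_congr rfl fun j _ => ?_
  rw [EuclideanSpace.norm_eq, ← Real.sqrt_sq (hwδ j), ← Real.sqrt_mul (sq_nonneg _), mul_sum,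
    ← sum_subtype_eq_sum_filter, subtype_univ]
  congr 1
  refine sum_congr rfl ?_
  rintro ⟨d, rfl⟩ _
  rw [Real.norm_eq_abs, sq_abs, mul_pow, mul_pow, Real.sq_sqrt (hwd d), mul_assoc]

theorem volume_combinedNorm_le_one (hwδ : ∀ j, 0 < wδ j) (hwd : ∀ d, 0 < wd d) :
    volume {v : D → ℝ | combinedNorm bl wδ wd v ≤ 1} = ENNReal.ofReal
      ((∏ d, wδ (bl d) * √(wd d))⁻¹ *
        ((∏ j, ballFactor #{d | bl d = j}) / (Fintype.card D).factorial)) := by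
  have hc (d : D) : 0 < wδ (bl d) * √(wd d) := mul_pos (hwδ _) (Real.sqrt_pos.2 (hwd d))
  have hprod : 0 < ∏ d, wδ (bl d) * √(wd d) := prod_pos fun d _ => hc d
  rw [ENNReal.ofReal_mul (inv_pos.2 hprod).le, ← abs_of_pos hprod, ← volume_sum_norm_fiber_le_one,
    ← volume_preimage_pi_mul_left _ fun d => (hc d).ne']
  simp_rw [combinedNorm_eq_sum_norm bl (fun j => (hwδ j).le) fun d => (hwd d).le]
  rfl

theorem volume_combinedNorm_le (hwδ : ∀ j, 0 < wδ j) (hwd : ∀ d, 0 < wd d) {ε : ℝ} (hε : 0 < ε) :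
    volume {v : D → ℝ | combinedNorm bl wδ wd v ≤ ε} = ENNReal.ofReal
      (1 / (∏ d, wδ (bl d) * √(wd d)) * (ε ^ Fintype.card D / (Fintype.card D).factorial) *
        ∏ j, ballFactor #{d | bl d = j}) := by
  have rescale (v : D → ℝ) :
      combinedNorm bl wδ wd v ≤ ε ↔ combinedNorm bl (fun j => wδ j / ε) wd v ≤ 1 := by
    simp only [combinedNorm, div_mul_eq_mul_div, ← sum_div, div_le_one hε]
  simp_rw [rescale, volume_combinedNorm_le_one bl (fun j => div_pos (hwδ j) hε) hwd,
    div_mul_eq_mul_div, prod_div_distrib, prod_const, card_univ, inv_div]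
  congr 1
  ring

theorem combinedNorm_updateFinset_zero [DecidableEq D] (wδ : ι → ℝ) (wd : D → ℝ) (T : Finset D)
    (u : T → ℝ) :
    combinedNorm bl wδ wd (Function.updateFinset 0 T u) =
      combinedNorm (fun d : T => bl d) wδ (fun d : T => wd d) u := by
  refine sum_congr rfl fun j _ => ?_
  rw [sum_filter, sum_filter, ← sum_subset (subset_univ T), ← sum_coe_sort T]
  · simp [Function.updateFinset]
  · intro d _ hd
    simp [Function.updateFinset, hd]

theorem volume_combinedNorm_updateFinset_zero_le [DecidableEq D] (hwδ : ∀ j, 0 < wδ j)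
    (hwd : ∀ d, 0 < wd d) {ε : ℝ} (hε : 0 < ε) (T : Finset D) :
    volume {u : T → ℝ | combinedNorm bl wδ wd (Function.updateFinset 0 T u) ≤ ε} = ENNReal.ofReal
      (1 / (∏ d ∈ T, wδ (bl d) * √(wd d)) * (ε ^ #T / (#T).factorial) *
        ∏ j, ballFactor #{d ∈ T | bl d = j}) := by
  have card_fiber (j : ι) : #{d : T | bl d = j} = #{d ∈ T | bl d = j} := by
    rw [card_filter, card_filter, sum_coe_sort T fun d => if bl d = j then 1 else 0]
  simp_rw [combinedNorm_updateFinset_zero,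
    volume_combinedNorm_le (fun d : T => bl d) hwδ (fun d => hwd d) hε, card_fiber,
    Fintype.card_coe, prod_coe_sort T fun d => wδ (bl d) * √(wd d)]

theorem combinedNorm_le_combinedNorm (hwδ : ∀ j, 0 ≤ wδ j) (hwd : ∀ d, 0 ≤ wd d) {u v : D → ℝ}
    (huv : |u| ≤ |v|) : combinedNorm bl wδ wd u ≤ combinedNorm bl wδ wd v := by
  have weighted_sq_le (d : D) : wd d * u d ^ 2 ≤ wd d * v d ^ 2 :=
    mul_le_mul_of_nonneg_left (sq_le_sq.2 (huv d)) (hwd d)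
  exact sum_le_sum fun j _ => mul_le_mul_of_nonneg_left
    (Real.sqrt_le_sqrt (sum_le_sum fun d _ => weighted_sq_le d)) (hwδ j)

theorem sInf_combinedNorm_sub_Icc (hwδ : ∀ j, 0 ≤ wδ j) (hwd : ∀ d, 0 ≤ wd d) {a b : D → ℝ}
    (hab : a ≤ b) (x : D → ℝ) :
    sInf ((fun y => combinedNorm bl wδ wd (x - y)) '' Set.Icc a b) =
      combinedNorm bl wδ wd (iccDisplacement a b x) := by
  refine IsLeast.csInf_eq ⟨⟨a ⊔ (b ⊓ x), ⟨le_sup_left, sup_le hab inf_le_left⟩, rfl⟩, ?_⟩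
  rintro _ ⟨y, hy, rfl⟩
  exact combinedNorm_le_combinedNorm bl hwδ hwd fun d =>
    abs_iccDisplacement_le ⟨hy.1 d, hy.2 d⟩ (x d)

end CombinedNorm

/-- The Lebesgue measure of the ε-neighborhood (under the
combined metric d_C) of a nonempty axis-parallel cuboid with side lengths
b_d = p⁺_d − p⁻_d equals the sum over all subsets T ⊆ D of
(∏_{d∉T} b_d) · (1/∏_{d∈T} w_{δ(d)}·√w_d) · (ε^{|T|}/|T|!) ·
∏_{δ: δ∩T≠∅} (|δ∩T|!·π^{|δ∩T|/2}/Γ(|δ∩T|/2+1)).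
The partition of `D` into nonempty domains is given by the fibers of the
surjective block map `bl : D → ι`. -/
theorem volume_eps_neighborhood_of_cuboid
    {D ι : Type*} [Fintype D] [Nonempty D] [DecidableEq D]
    [Fintype ι] [DecidableEq ι]
    (bl : D → ι) (hbl : Function.Surjective bl)
    (wδ : ι → ℝ) (wd : D → ℝ)
    (hwδ : ∀ j, 0 < wδ j) (hwd : ∀ d, 0 < wd d)
    (dC : (D → ℝ) → (D → ℝ) → ℝ)
    (hdC : ∀ x y, dC x y = ∑ j : ι, wδ j *
      Real.sqrt (∑ d ∈ univ.filter (fun d => bl d = j), wd d * (x d - y d) ^ 2))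
    (pm pp : D → ℝ) (hple : ∀ d, pm d ≤ pp d)
    (C : Set (D → ℝ))
    (hC : C = {x : D → ℝ | ∀ d, pm d ≤ x d ∧ x d ≤ pp d})
    (ε : ℝ) (hε : 0 < ε) :
    MeasureTheory.volume {x : D → ℝ | sInf ((fun y => dC x y) '' C) ≤ ε} =
      ENNReal.ofReal
        (∑ T ∈ (univ : Finset D).powerset,
          (∏ d ∈ univ \ T, (pp d - pm d)) *
          (1 / ∏ d ∈ T, (wδ (bl d) * Real.sqrt (wd d))) *
          (ε ^ T.card / (Nat.factorial T.card : ℝ)) *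
          ∏ j ∈ univ.filter (fun j => T.filter (fun d => bl d = j) ≠ ∅),
            ((Nat.factorial (T.filter (fun d => bl d = j)).card : ℝ) *
              Real.pi ^ (((T.filter (fun d => bl d = j)).card : ℝ) / 2) /
              Real.Gamma (((T.filter (fun d => bl d = j)).card : ℝ) / 2 + 1))) := by
  obtain rfl : dC = fun x y => combinedNorm bl wδ wd (x - y) := funext₂ hdC
  obtain rfl : C = Set.Icc pm pp := hC.trans (by ext x; simp [Pi.le_def, forall_and])
  have sides_nonneg (T : Finset D) : 0 ≤ ∏ d ∈ Tᶜ, (pp d - pm d) :=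
    prod_nonneg fun d _ => sub_nonneg.2 (hple d)
  have weights_nonneg (T : Finset D) : 0 ≤ ∏ d ∈ T, wδ (bl d) * √(wd d) :=
    prod_nonneg fun d _ => mul_nonneg (hwδ _).le (Real.sqrt_nonneg _)
  have factors_nonneg (T : Finset D) : 0 ≤ ∏ j, ballFactor #{d ∈ T | bl d = j} :=
    prod_nonneg fun j _ => ballFactor_nonneg _
  simp_rw [sInf_combinedNorm_sub_Icc bl (fun j => (hwδ j).le) (fun d => (hwd d).le) hple]
  refine (volume_preimage_iccDisplacement hple
    (measurableSet_le (measurable_combinedNorm bl wδ wd) measurable_const)).trans ?_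
  simp only [Set.mem_ofPred_eq, volume_combinedNorm_updateFinset_zero_le bl hwδ hwd hε,
    ← ENNReal.ofReal_mul (sides_nonneg _), powerset_univ, ← compl_eq_univ_sdiff]
  rw [← ENNReal.ofReal_sum_of_nonneg fun T _ => mul_nonneg (sides_nonneg T)
    (mul_nonneg (mul_nonneg (one_div_nonneg.2 (weights_nonneg T)) (by positivity))
      (factors_nonneg T))]
  simp_rw [← prod_filter_ballFactor, ← mul_assoc]
  rfl
end
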